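/- Assume σ ≡ 1 (mod 2) and N_{Z/ℚ}(η) ≡ 1 (mod 2). Then for every integer i with 1 ≤ i ≤ n−1, the matrix U^i·D(η) satisfies (U^i·D(η))^{n+1} − U^i·D(η) ∈ 2·M_n(O_Z); hence, setting W = (U^i·D(η))^{(n+1)/2} (note n+1 is even since n is odd), U^i·D(η) is congruent to the square W² modulo 2·M_n(O_Z). -/

import Mathlib

set_option synthInstance.maxHeartbeats 1000000

noncomputable section

/-- `ζ = e^{2πi/p}`, a primitive `p`-th root of unity in `ℂ`. -/
def zetaC (p : ℕ) : ℂ := Complex.exp (2 * Real.pi * Complex.I / p)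

/-- The Gaussian period `η_s = ∑_{r=0}^{h-1} ζ^{g^{nr+s}}`. -/
def gaussPeriod (n p h g : ℕ) (s : ℕ) : ℂ :=
  ∑ r ∈ Finset.range h, zetaC p ^ (g ^ (n * r + s))

/-- `Z = ℚ(η)`, the subfield of `ℂ` generated over `ℚ` by the Gaussian period `η = η₀`. -/
def Zf (n p h g : ℕ) : IntermediateField ℚ ℂ :=
  IntermediateField.adjoin ℚ {gaussPeriod n p h g 0}

/-- `η` as an element of `Z = ℚ(η)`. -/
def etaZ (n p h g : ℕ) : Zf n p h g :=
  ⟨gaussPeriod n p h g 0, IntermediateField.subset_adjoin ℚ _ rfl⟩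

/-- `D(z) = diag(z, S(z), …, S^{n-1}(z))` in `M_n(Z)`. -/
def Dm (n p h g : ℕ) (S : Zf n p h g ≃ₐ[ℚ] Zf n p h g) (z : Zf n p h g) :
    Matrix (Fin n) (Fin n) (Zf n p h g) :=
  Matrix.diagonal fun i => (S ^ (i : ℕ)) z

/-- The matrix `U` with `U_{i+1,i} = 1`, `U_{1,n} = σ`, and `0` elsewhere
(indices written `0`-based), for an integer `σ`. -/
def Um (n p h g : ℕ) (σ : ℤ) : Matrix (Fin n) (Fin n) (Zf n p h g) :=
  Matrix.of fun i j =>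
    if (i : ℕ) = (j : ℕ) + 1 then 1
    else if (i : ℕ) = 0 ∧ (j : ℕ) = n - 1 then (σ : Zf n p h g) else 0

/-!
The matrices `U` and `D(z)` generate a cyclic algebra: `D(z) U = U D(S z)` and `U ^ n = σ`. Hence
`(U ^ i D(z)) ^ n = σ ^ i D(∏_{j < n} S ^ (i j) z)`. If `i` is prime to `n`, then `S ^ i` still
generates the Galois group, so the product is a power of the norm of `z`. Thus `(U ^ i D(η)) ^ n` is
an integer, congruent to `1` as soon as `σ` and the norm of `η` are.
-/

section CyclicProducts

variable {G M : Type*} [Group G] [Fintype G] [CommMonoid M] {t : G}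

theorem prod_range_orderOf_pow_eq_prod_univ (ht : ∀ x, x ∈ Subgroup.zpowers t) (f : G → M) :
    ∏ j ∈ Finset.range (orderOf t), f (t ^ j) = ∏ x, f x := by
  classical
  rw [← IsCyclic.image_range_orderOf ht, Finset.prod_image]
  simpa only [Finset.coe_range] using pow_injOn_Iio_orderOf (x := t)

theorem prod_range_pow_eq_prod_univ_pow (ht : ∀ x, x ∈ Subgroup.zpowers t) {n : ℕ}
    (hn : t ^ n = 1) (f : G → M) :
    ∏ j ∈ Finset.range n, f (t ^ j) = (∏ x, f x) ^ (n / orderOf t) := by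
  obtain ⟨k, rfl⟩ := orderOf_dvd_of_pow_eq_one hn
  rw [Nat.mul_div_cancel_left k (orderOf_pos t)]
  clear hn
  induction k with
  | zero => simp
  | succ k ih =>
    simp only [Nat.mul_succ, Finset.prod_range_add, pow_add, pow_mul, pow_orderOf_eq_one, one_pow,
      one_mul, pow_one, ih, prod_range_orderOf_pow_eq_prod_univ ht]

end CyclicProducts

theorem mem_zpowers_pow_of_coprime {G : Type*} [Group G] {t : G}
    (ht : ∀ x, x ∈ Subgroup.zpowers t) {n i : ℕ} (hn : t ^ n = 1) (hi : i.Coprime n) (x : G) :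
    x ∈ Subgroup.zpowers (t ^ i) := by
  have ht_mem : t ∈ Subgroup.zpowers (t ^ i) :=
    mem_zpowers_pow_iff.mpr (hi.coprime_dvd_right (orderOf_dvd_of_pow_eq_one hn))
  exact Subgroup.zpowers_le.mpr ht_mem (ht x)

theorem prod_range_pow_apply_eq_norm_pow {F K : Type*} [Field F] [Field K] [Algebra F K]
    [FiniteDimensional F K] [IsGalois F K] {T : K ≃ₐ[F] K}
    (hT : ∀ τ, τ ∈ Subgroup.zpowers T) {n : ℕ} (hTn : T ^ n = 1) (z : K) :
    ∏ j ∈ Finset.range n, (T ^ j) z = algebraMap F K (Algebra.norm F z ^ (n / orderOf T)) := by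
  rw [map_pow, Algebra.norm_eq_prod_automorphisms]
  exact prod_range_pow_eq_prod_univ_pow hT hTn fun τ => τ z

section Twist

variable {G A M : Type*} [Monoid G] [Monoid M] {τ : G} {u : M}

theorem mul_pow_of_twist [MulAction G A] {d : A → M} (h : ∀ a, d a * u = u * d (τ • a)) (k : ℕ)
    (a : A) :
    d a * u ^ k = u ^ k * d (τ ^ k • a) := by
  induction k generalizing a with
  | zero => simp
  | succ k ih => rw [pow_succ', ← mul_assoc, h, mul_assoc, ih, smul_smul, ← pow_succ, mul_assoc]

theorem mul_map_pow_of_twist [CommMonoid A] [MulAction G A] {d : A →* M}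
    (h : ∀ a, d a * u = u * d (τ • a)) (k : ℕ) (a : A) :
    (u * d a) ^ k = u ^ k * d (∏ j ∈ Finset.range k, τ ^ j • a) := by
  induction k with
  | zero => simp
  | succ k ih =>
    rw [pow_succ', ih, mul_assoc, ← mul_assoc (d a), mul_pow_of_twist h, mul_assoc, ← map_mul,
      ← mul_assoc, ← pow_succ', Finset.prod_range_succ, mul_comm (τ ^ k • a)]

end Twist

section CyclicShift

variable {R : Type*} [CommSemiring R]

/-- The matrix of the weighted cyclic shift `e₀ ↦ e₁ ↦ ⋯ ↦ eₙ₋₁ ↦ σ e₀`; this is `U`, over an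
arbitrary commutative semiring. -/
def cyclicShift (n : ℕ) (σ : R) : Matrix (Fin n) (Fin n) R :=
  Matrix.of fun i j =>
    if (i : ℕ) = (j : ℕ) + 1 then 1 else if (i : ℕ) = 0 ∧ (j : ℕ) = n - 1 then σ else 0

variable {n : ℕ} (σ : R)

theorem cyclicShift_mulVec_single {k : ℕ} (hk : k + 1 < n) :
    (cyclicShift n σ).mulVec (Pi.single ⟨k, by omega⟩ 1) = Pi.single ⟨k + 1, hk⟩ 1 := by
  ext a
  have hlast : k ≠ n - 1 := by omega
  simp [cyclicShift, Pi.single_apply, Fin.ext_iff, hlast]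

theorem cyclicShift_mulVec_single_last (hn : 0 < n) :
    (cyclicShift n σ).mulVec (Pi.single ⟨n - 1, by omega⟩ 1) = σ • Pi.single ⟨0, hn⟩ 1 := by
  ext a
  have hlast : (a : ℕ) ≠ n - 1 + 1 := by omega
  simp [cyclicShift, Pi.single_apply, Fin.ext_iff, hlast]

theorem cyclicShift_pow_mulVec_single_zero {k : ℕ} (hk : k < n) :
    (cyclicShift n σ ^ k).mulVec (Pi.single ⟨0, by omega⟩ 1) = Pi.single ⟨k, hk⟩ 1 := by
  induction k with
  | zero => rw [pow_zero, Matrix.one_mulVec]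
  | succ k ih =>
    rw [pow_succ', ← Matrix.mulVec_mulVec, ih (by omega), cyclicShift_mulVec_single σ hk]

theorem cyclicShift_pow_self_mulVec_single_zero (hn : 0 < n) :
    (cyclicShift n σ ^ n).mulVec (Pi.single ⟨0, hn⟩ 1) = σ • Pi.single ⟨0, hn⟩ 1 := by
  rw [← mul_pow_sub_one hn.ne', ← Matrix.mulVec_mulVec,
    cyclicShift_pow_mulVec_single_zero σ (Nat.sub_one_lt hn.ne'), cyclicShift_mulVec_single_last]

-- `e₀` is a cyclic vector of `U`, and `U ^ n - σ` commutes with `U` and kills `e₀`.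
theorem cyclicShift_pow_self : cyclicShift n σ ^ n = algebraMap R _ σ := by
  refine Matrix.ext_of_mulVec_single fun k => ?_
  have hn : 0 < n := k.pos
  rw [← cyclicShift_pow_mulVec_single_zero σ k.isLt, Matrix.mulVec_mulVec, Matrix.mulVec_mulVec,
    Algebra.commutes, ← pow_add, add_comm, pow_add, ← Matrix.mulVec_mulVec,
    ← Matrix.mulVec_mulVec, cyclicShift_pow_self_mulVec_single_zero σ hn,
    Algebra.algebraMap_eq_smul_one, Matrix.smul_mulVec, Matrix.one_mulVec]

theorem cyclicShift_mem_matrix {C : Type*} [CommSemiring C] [Algebra C R] {O : Subalgebra C R}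
    (hσ : σ ∈ O) : cyclicShift n σ ∈ O.matrix := by
  intro a b
  rw [cyclicShift, Matrix.of_apply]
  split_ifs
  exacts [one_mem O, hσ, zero_mem O]

end CyclicShift

section TwistedDiagonal

variable {F A : Type*} [CommSemiring F] [CommSemiring A] [Algebra F A]

/-- The embedding `z ↦ diag(z, S z, …, S ^ (n - 1) z)`, which is `D`, for an automorphism
`S` of an arbitrary commutative algebra. -/
def twistedDiagonal (n : ℕ) (S : A ≃ₐ[F] A) : A →ₐ[F] Matrix (Fin n) (Fin n) A :=
  (Matrix.diagonalAlgHom F).comp (AlgHom.pi fun i : Fin n => (S ^ (i : ℕ) : A ≃ₐ[F] A).toAlgHom)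

variable {n : ℕ} {S : A ≃ₐ[F] A}

theorem twistedDiagonal_apply (z : A) :
    twistedDiagonal n S z = Matrix.diagonal fun i : Fin n => (S ^ (i : ℕ)) z :=
  rfl

theorem twistedDiagonal_mul_cyclicShift (hS : S ^ n = 1) (σ z : A) :
    twistedDiagonal n S z * cyclicShift n σ = cyclicShift n σ * twistedDiagonal n S (S z) := by
  ext a b
  have hpow : (S ^ (b : ℕ)) (S z) = (S ^ ((b : ℕ) + 1)) z := by rw [pow_succ, AlgEquiv.mul_apply]
  rw [twistedDiagonal_apply, twistedDiagonal_apply, Matrix.diagonal_mul, Matrix.mul_diagonal, hpow,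
    mul_comm, cyclicShift, Matrix.of_apply]
  split_ifs with hsucc hcorner
  · rw [hsucc]
  · have hb : (b : ℕ) + 1 = n := by omega
    rw [hcorner.1, hb, hS, pow_zero]
  · rw [zero_mul, zero_mul]

theorem cyclicShift_pow_mul_twistedDiagonal_pow (hS : S ^ n = 1) (σ z : A) (i k : ℕ) :
    (cyclicShift n σ ^ i * twistedDiagonal n S z) ^ k =
      (cyclicShift n σ ^ i) ^ k *
        twistedDiagonal n S (∏ j ∈ Finset.range k, ((S ^ i) ^ j) z) := by
  let d : A →* Matrix (Fin n) (Fin n) A := twistedDiagonal n S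
  have htwist : ∀ a, d a * cyclicShift n σ = cyclicShift n σ * d (S • a) :=
    twistedDiagonal_mul_cyclicShift hS σ
  exact mul_map_pow_of_twist (d := d) (mul_pow_of_twist htwist i) k z

end TwistedDiagonal

theorem cyclicShift_pow_mul_twistedDiagonal_pow_self {F K : Type*} [Field F] [Field K]
    [Algebra F K] [FiniteDimensional F K] [IsGalois F K] {S : K ≃ₐ[F] K}
    (hS : ∀ τ, τ ∈ Subgroup.zpowers S) {n i : ℕ} (hSn : S ^ n = 1) (hi : i.Coprime n)
    (σ : F) (z : K) :
    (cyclicShift n (algebraMap F K σ) ^ i * twistedDiagonal n S z) ^ n =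
      algebraMap F _ (σ ^ i * Algebra.norm F z ^ (n / orderOf (S ^ i))) := by
  have hpow : (S ^ i) ^ n = 1 := by rw [pow_right_comm, hSn, one_pow]
  rw [cyclicShift_pow_mul_twistedDiagonal_pow hSn,
    prod_range_pow_apply_eq_norm_pow (mem_zpowers_pow_of_coprime hS hSn hi) hpow, AlgHom.commutes,
    pow_right_comm, cyclicShift_pow_self, ← IsScalarTower.algebraMap_apply, map_mul, map_pow _ σ]

theorem exists_mem_pow_succ_sub_self_eq_nsmul {R : Type*} [Ring R] {O : Subalgebra ℤ R} {x : R}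
    (hx : x ∈ O) {n m : ℕ} {c : ℤ} (hc : c ≡ 1 [ZMOD m]) (hxn : x ^ n = c) :
    ∃ y ∈ O, x ^ (n + 1) - x = m • y := by
  obtain ⟨k, hk⟩ := hc.symm.dvd
  refine ⟨k • x, O.smul_mem hx k, ?_⟩
  calc x ^ (n + 1) - x = ((c - 1 : ℤ) : R) * x := by
        rw [pow_succ, hxn, Int.cast_sub, Int.cast_one, sub_mul, one_mul]
    _ = m • k • x := by
        rw [hk, Int.cast_mul, Int.cast_natCast, mul_assoc, nsmul_eq_mul, zsmul_eq_mul]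

section AdjoinPrimitiveRoot

open Polynomial

variable {F E : Type*} [Field F] [Field E] [Algebra F E] {ζ : E} {p : ℕ}
  (hζ : IsPrimitiveRoot ζ p) (hp : 0 < p) {K : IntermediateField F E}
  (hK : K ≤ IntermediateField.adjoin F {ζ})

include hζ hp

theorem isCyclotomicExtension_adjoin_of_isPrimitiveRoot :
    IsCyclotomicExtension {p} F (IntermediateField.adjoin F {ζ}) := by
  have : NeZero p := ⟨hp.ne'⟩
  have halg : IsAlgebraic F ζ := (hζ.isIntegral hp).tower_top.isAlgebraic
  change IsCyclotomicExtension {p} F (IntermediateField.adjoin F {ζ}).toSubalgebra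
  rw [IntermediateField.adjoin_simple_toSubalgebra_of_isAlgebraic halg]
  exact hζ.adjoin_isCyclotomicExtension F

include hK

theorem finiteDimensional_of_le_adjoin_isPrimitiveRoot : FiniteDimensional F K := by
  have := isCyclotomicExtension_adjoin_of_isPrimitiveRoot (F := F) hζ hp
  have := IsCyclotomicExtension.finiteDimensional {p} F (IntermediateField.adjoin F {ζ})
  exact .of_injective (IntermediateField.inclusion hK).toLinearMap
    (IntermediateField.inclusion hK).injective

theorem isGalois_of_le_adjoin_isPrimitiveRoot : IsGalois F K := by
  have := isCyclotomicExtension_adjoin_of_isPrimitiveRoot (F := F) hζ hp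
  have := IsCyclotomicExtension.isAbelianGalois {p} F (IntermediateField.adjoin F {ζ})
  exact (IsAbelianGalois.of_algHom (IntermediateField.inclusion hK)).toIsGalois

theorem exists_isPrimitiveRoot_map_eq_aeval [IsAlgClosed E] (f : K →ₐ[F] E) :
    ∃ ξ : E, IsPrimitiveRoot ξ p ∧
      ∀ (P : F[X]) (x : K), (x : E) = aeval ζ P → f x = aeval ξ P := by
  have hsplits : ∀ s ∈ ({ζ} : Set E),
      IsIntegral F s ∧ ((minpoly F s).map (algebraMap F E)).Splits := by
    rintro _ rfl
    exact ⟨(hζ.isIntegral hp).tower_top, IsAlgClosed.splits _⟩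
  obtain ⟨φ, rfl⟩ := IntermediateField.exists_algHom_adjoin_of_splits hsplits f hK
  let ζ' : IntermediateField.adjoin F {ζ} := IntermediateField.AdjoinSimple.gen F ζ
  have hζ' : IsPrimitiveRoot ζ' p :=
    .of_map_of_injective (f := algebraMap _ E) hζ Subtype.val_injective
  refine ⟨φ ζ', hζ'.map_of_injective φ.injective, fun P x hx => ?_⟩
  have hincl : IntermediateField.inclusion hK x = aeval ζ' P :=
    Subtype.ext (hx.trans (aeval_algebraMap_apply E ζ' P))
  rw [AlgHom.comp_apply, hincl, aeval_algHom_apply]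

end AdjoinPrimitiveRoot

section PrimitiveRoot

variable {p g : ℕ}

theorem exists_pow_eq_of_orderOf_eq_sub_one [Fact p.Prime] {x : ZMod p} (hx : orderOf x = p - 1)
    {a : ZMod p} (ha : a ≠ 0) : ∃ s : ℕ, x ^ s = a := by
  have hpos : 0 < orderOf x := hx ▸ Nat.sub_pos_of_lt (Fact.out : p.Prime).one_lt
  let u : (ZMod p)ˣ := (orderOf_pos_iff.mp hpos).unit
  have hcard : orderOf u = Nat.card (ZMod p)ˣ := by
    rw [← orderOf_units, IsOfFinOrder.val_unit, hx, Nat.card_eq_fintype_card, ZMod.card_units]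
  have hgen : Subgroup.zpowers u = ⊤ :=
    Subgroup.eq_top_of_card_eq _ (by rw [Nat.card_zpowers, hcard])
  obtain ⟨s, hs⟩ : Units.mk0 a ha ∈ Submonoid.powers u := by
    rw [mem_powers_iff_mem_zpowers, hgen]
    exact Subgroup.mem_top _
  exact ⟨s, congrArg Units.val hs⟩

theorem isPrimitiveRoot_zetaC (hp : p ≠ 0) : IsPrimitiveRoot (zetaC p) p :=
  Complex.isPrimitiveRoot_exp p hp

theorem zetaC_pow_eq_of_natCast_eq (hp : p ≠ 0) {a b : ℕ} (hab : (a : ZMod p) = b) :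
    zetaC p ^ a = zetaC p ^ b := by
  have hζ := isPrimitiveRoot_zetaC hp
  rw [(hζ.isOfFinOrder hp).pow_inj_mod, ← hζ.eq_orderOf]
  exact (ZMod.natCast_eq_natCast_iff a b p).mp hab

theorem exists_eq_zetaC_pow_pow (hp : p.Prime) (hg : orderOf (g : ZMod p) = p - 1) {ξ : ℂ}
    (hξ : IsPrimitiveRoot ξ p) : ∃ s : ℕ, ξ = zetaC p ^ g ^ s := by
  have : Fact p.Prime := ⟨hp⟩
  obtain ⟨a, -, hcop, rfl⟩ := (isPrimitiveRoot_zetaC hp.ne_zero).isPrimitiveRoot_iff.mp hξ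
  have ha : (a : ZMod p) ≠ 0 := by
    rw [Ne, ZMod.natCast_eq_zero_iff, ← hp.coprime_iff_not_dvd]
    exact hcop.symm
  obtain ⟨s, hs⟩ := exists_pow_eq_of_orderOf_eq_sub_one hg ha
  exact ⟨s, zetaC_pow_eq_of_natCast_eq hp.ne_zero (by rw [Nat.cast_pow, hs])⟩

end PrimitiveRoot

section GaussPeriod

open Polynomial

variable {n p h g : ℕ}

theorem isIntegral_gaussPeriod (hp : p ≠ 0) (s : ℕ) : IsIntegral ℤ (gaussPeriod n p h g s) :=
  IsIntegral.sum _ fun _ _ => ((isPrimitiveRoot_zetaC hp).isIntegral (Nat.pos_of_ne_zero hp)).pow _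

theorem gaussPeriod_self (hp : p ≠ 0) (hg : (g : ZMod p) ^ (n * h) = 1) :
    gaussPeriod n p h g n = gaussPeriod n p h g 0 := by
  have hwrap : zetaC p ^ g ^ (n * h) = zetaC p ^ g ^ (n * 0) :=
    zetaC_pow_eq_of_natCast_eq hp (by simp [hg])
  have hshift := Finset.sum_range_succ' (fun r => zetaC p ^ g ^ (n * r)) h
  rw [Finset.sum_range_succ, hwrap] at hshift
  exact (add_right_cancel hshift).symm

theorem Zf_le_adjoin_zetaC : Zf n p h g ≤ IntermediateField.adjoin ℚ {zetaC p} := by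
  rw [Zf, IntermediateField.adjoin_simple_le_iff]
  exact sum_mem fun r _ => pow_mem (IntermediateField.mem_adjoin_simple_self ℚ _) _

theorem algHom_etaZ_mem_range_gaussPeriod (hp : p.Prime) (hg : orderOf (g : ZMod p) = p - 1)
    (f : Zf n p h g →ₐ[ℚ] ℂ) : f (etaZ n p h g) ∈ Set.range (gaussPeriod n p h g) := by
  obtain ⟨ξ, hξ, hf⟩ := exists_isPrimitiveRoot_map_eq_aeval (isPrimitiveRoot_zetaC hp.ne_zero)
    hp.pos Zf_le_adjoin_zetaC f
  obtain ⟨s, rfl⟩ := exists_eq_zetaC_pow_pow hp hg hξ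
  have hη : (etaZ n p h g : ℂ) =
      aeval (zetaC p) (∑ r ∈ Finset.range h, X ^ g ^ (n * r) : ℚ[X]) := by
    simp only [map_sum, map_pow, aeval_X]
    rfl
  refine ⟨s, Eq.trans ?_ (hf _ _ hη).symm⟩
  simp only [map_sum, map_pow, aeval_X, gaussPeriod, ← pow_mul, ← pow_add, add_comm s]

theorem Um_eq_cyclicShift (σ : ℤ) : Um n p h g σ = cyclicShift n (σ : Zf n p h g) :=
  rfl

theorem Dm_eq_twistedDiagonal (S : Zf n p h g ≃ₐ[ℚ] Zf n p h g) (z : Zf n p h g) :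
    Dm n p h g S z = twistedDiagonal n S z :=
  rfl

theorem Zf_algEquiv_ext {τ τ' : Zf n p h g ≃ₐ[ℚ] Zf n p h g}
    (hη : τ (etaZ n p h g) = τ' (etaZ n p h g)) : τ = τ' := by
  apply AlgEquiv.coe_toAlgHom_injective
  refine IntermediateField.algHom_ext_of_eq_adjoin ℚ (s := {gaussPeriod n p h g 0}) rfl ?_
  rintro _ rfl
  exact hη

variable {S : Zf n p h g ≃ₐ[ℚ] Zf n p h g}
  (hS : ∀ s : ℕ, (((S ^ s) (etaZ n p h g) : Zf n p h g) : ℂ) = gaussPeriod n p h g s)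

include hS

theorem pow_eq_one_of_forall_pow_etaZ (hp : p ≠ 0) (hg : (g : ZMod p) ^ (n * h) = 1) :
    S ^ n = 1 :=
  Zf_algEquiv_ext (Subtype.ext ((hS n).trans (gaussPeriod_self hp hg)))

theorem mem_zpowers_of_forall_pow_etaZ (hp : p.Prime) (hg : orderOf (g : ZMod p) = p - 1)
    (τ : Zf n p h g ≃ₐ[ℚ] Zf n p h g) : τ ∈ Subgroup.zpowers S := by
  obtain ⟨s, hs⟩ := algHom_etaZ_mem_range_gaussPeriod hp hg ((Zf n p h g).val.comp τ.toAlgHom)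
  have hτ : S ^ s = τ := Zf_algEquiv_ext (Subtype.ext ((hS s).trans hs))
  exact hτ ▸ Subgroup.npow_mem_zpowers S s

theorem isIntegral_pow_etaZ (hp : p ≠ 0) (s : ℕ) : IsIntegral ℤ ((S ^ s) (etaZ n p h g)) := by
  rw [← isIntegral_algebraMap_iff (algebraMap (Zf n p h g) ℂ).injective]
  change IsIntegral ℤ (((S ^ s) (etaZ n p h g) : Zf n p h g) : ℂ)
  rw [hS]
  exact isIntegral_gaussPeriod hp s

theorem Um_pow_mul_Dm_etaZ_mem_matrix (hp : p ≠ 0) (σ : ℤ) (i : ℕ) :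
    Um n p h g σ ^ i * Dm n p h g S (etaZ n p h g) ∈
      (integralClosure ℤ (Zf n p h g)).matrix := by
  have hU : Um n p h g σ ∈ (integralClosure ℤ (Zf n p h g)).matrix :=
    Um_eq_cyclicShift (n := n) (p := p) σ ▸ cyclicShift_mem_matrix _ (intCast_mem _ σ)
  have hD : Dm n p h g S (etaZ n p h g) ∈ (integralClosure ℤ (Zf n p h g)).matrix :=
    (Matrix.diagonal_mem_matrix_iff (zero_mem _)).mpr fun s => isIntegral_pow_etaZ hS hp s
  exact mul_mem (pow_mem hU i) hD

theorem Um_pow_mul_Dm_etaZ_pow_self (hp : p.Prime) (hph : p = n * h + 1)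
    (hg : orderOf (g : ZMod p) = p - 1) {N : ℤ} (hN : Algebra.norm ℚ (etaZ n p h g) = N)
    (σ : ℤ) {i : ℕ} (hi : i.Coprime n) :
    (Um n p h g σ ^ i * Dm n p h g S (etaZ n p h g)) ^ n =
      ((σ ^ i * N ^ (n / orderOf (S ^ i)) : ℤ) : Matrix (Fin n) (Fin n) (Zf n p h g)) := by
  have hζ := isPrimitiveRoot_zetaC hp.ne_zero
  have : FiniteDimensional ℚ (Zf n p h g) :=
    finiteDimensional_of_le_adjoin_isPrimitiveRoot hζ hp.pos Zf_le_adjoin_zetaC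
  have : IsGalois ℚ (Zf n p h g) :=
    isGalois_of_le_adjoin_isPrimitiveRoot hζ hp.pos Zf_le_adjoin_zetaC
  have hgpow : (g : ZMod p) ^ (n * h) = 1 := by
    rw [← Nat.add_sub_cancel (n := n * h) (m := 1), ← hph, ← hg, pow_orderOf_eq_one]
  have hSn := pow_eq_one_of_forall_pow_etaZ hS hp.ne_zero hgpow
  have hgen := mem_zpowers_of_forall_pow_etaZ hS hp hg
  have hpow := cyclicShift_pow_mul_twistedDiagonal_pow_self hgen hSn hi (σ : ℚ) (etaZ n p h g)
  rw [hN, map_intCast, ← Int.cast_pow, ← Int.cast_pow, ← Int.cast_mul, map_intCast] at hpow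
  rw [Um_eq_cyclicShift, Dm_eq_twistedDiagonal, hpow]

end GaussPeriod

theorem U_pow_mul_D_eta_congr_square_mod_two_general
    (n p h g m : ℕ) (σ : ℤ) (hnodd : Odd n) (hp : p.Prime) (hph : p = n * h + 1)
    (hg : orderOf (g : ZMod p) = p - 1)
    (S : Zf n p h g ≃ₐ[ℚ] Zf n p h g)
    (hS : ∀ s : ℕ, (((S ^ s) (etaZ n p h g) : Zf n p h g) : ℂ) = gaussPeriod n p h g s)
    (hσ : σ ≡ 1 [ZMOD m])
    (hnorm : ∃ N : ℤ, N ≡ 1 [ZMOD m] ∧ Algebra.norm ℚ (etaZ n p h g) = (N : ℚ))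
    (i : ℕ) (hi : i.Coprime n) :
    (∃ M : Matrix (Fin n) (Fin n) (Zf n p h g),
      (∀ a b, IsIntegral ℤ (M a b)) ∧
      (Um n p h g σ ^ i * Dm n p h g S (etaZ n p h g)) ^ (n + 1) -
        Um n p h g σ ^ i * Dm n p h g S (etaZ n p h g) = m • M) ∧
    (∃ M : Matrix (Fin n) (Fin n) (Zf n p h g),
      (∀ a b, IsIntegral ℤ (M a b)) ∧
      Um n p h g σ ^ i * Dm n p h g S (etaZ n p h g) -
        ((Um n p h g σ ^ i * Dm n p h g S (etaZ n p h g)) ^ ((n + 1) / 2)) ^ 2 = m • M) := by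
  obtain ⟨N, hN, hnormN⟩ := hnorm
  have hc : σ ^ i * N ^ (n / orderOf (S ^ i)) ≡ 1 [ZMOD m] := by
    simpa only [one_pow, one_mul] using (hσ.pow i).mul (hN.pow (n / orderOf (S ^ i)))
  obtain ⟨M, hM, hsub⟩ := exists_mem_pow_succ_sub_self_eq_nsmul
    (Um_pow_mul_Dm_etaZ_mem_matrix hS hp.ne_zero σ i) hc
    (Um_pow_mul_Dm_etaZ_pow_self hS hp hph hg hnormN σ hi)
  refine ⟨⟨M, hM, hsub⟩, -M, neg_mem hM, ?_⟩
  rw [← pow_mul, Nat.div_mul_cancel hnodd.add_one.two_dvd, smul_neg, ← hsub, neg_sub]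

/-- If `σ ≡ 1 (mod 2)` and `N_{Z/ℚ}(η) ≡ 1 (mod 2)`, then for
`1 ≤ i ≤ n-1` one has `(U^i·D(η))^{n+1} − U^i·D(η) ∈ 2·M_n(O_Z)`; hence, with
`W = (U^i·D(η))^{(n+1)/2}`, the matrix `U^i·D(η)` is congruent to `W²` modulo
`2·M_n(O_Z)`. -/
theorem U_pow_mul_D_eta_congr_square_mod_two
    (n p h g : ℕ) (σ : ℤ)
    (hn : n.Prime) (hnodd : Odd n)
    (hp : p.Prime)
    (hph : p = n * h + 1)
    (hg : orderOf (g : ZMod p) = p - 1)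
    (S : Zf n p h g ≃ₐ[ℚ] Zf n p h g)
    (hS : ∀ s : ℕ, (((S ^ s) (etaZ n p h g) : Zf n p h g) : ℂ) = gaussPeriod n p h g s)
    (hσodd : σ % 2 = 1)
    (hnorm : ∃ N : ℤ, Odd N ∧ Algebra.norm ℚ (etaZ n p h g) = (N : ℚ))
    (i : ℕ) (hi1 : 1 ≤ i) (hi2 : i ≤ n - 1) :
    (∃ M : Matrix (Fin n) (Fin n) (Zf n p h g),
      (∀ a b, IsIntegral ℤ (M a b)) ∧
      (Um n p h g σ ^ i * Dm n p h g S (etaZ n p h g)) ^ (n + 1) -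
        Um n p h g σ ^ i * Dm n p h g S (etaZ n p h g) = 2 • M) ∧
    (∃ M : Matrix (Fin n) (Fin n) (Zf n p h g),
      (∀ a b, IsIntegral ℤ (M a b)) ∧
      Um n p h g σ ^ i * Dm n p h g S (etaZ n p h g) -
        ((Um n p h g σ ^ i * Dm n p h g S (etaZ n p h g)) ^ ((n + 1) / 2)) ^ 2 = 2 • M) := by
  exact U_pow_mul_D_eta_congr_square_mod_two_general n p h g 2 σ hnodd hp hph hg S hS hσodd
    (hnorm.imp fun _ hN => ⟨Int.odd_iff.mp hN.1, hN.2⟩) i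
    (Nat.coprime_of_lt_prime (by omega) (by omega) hn).symm

end
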